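/- (No H¹-capacity of the fat diagonal.) Let N ≥ 2 and consider ℝ^{2N} = (ℝ²)^N with fat diagonal △ := {x : x_j = x_k for some j ≠ k}. Then smooth compactly supported functions vanishing near △ are dense in H¹: for every smooth compactly supported f : ℝ^{2N} → ℂ and every ε > 0 there exists a smooth compactly supported g : ℝ^{2N} → ℂ vanishing on an open neighborhood of △ such that ∫_{ℝ^{2N}} |f − g|² + ∫_{ℝ^{2N}} ‖∇(f − g)‖² < ε. -/

import Mathlib

open MeasureTheory

/-- The fat diagonal in `(ℝ²)^N`. -/
def fatDiagonal (N : ℕ) : Set (Fin N → Fin 2 → ℝ) :=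
  {x | ∃ j k, j ≠ k ∧ x j = x k}

/-!
Zero capacity of a subspace of codimension at least two reduces to that of a point in dimension
`d ≥ 2`. There, the Dirichlet energy of `y ↦ ψ (2 ^ i • y)` is at most that of `ψ` for every `i`,
and if `ψ` is constant off a thin shell, the gradients of these dilates have disjoint supports.
If `ψ` is `1` near the origin, then so is the mean of `n` of them, while its energy is `O(1 / n)`.
Cutting off successively along the finitely many subspaces that make up the fat diagonal gives the
theorem.
-/

open Filter Topology Module

section NormSq

variable {F : Type*} [SeminormedAddCommGroup F]

lemma norm_add_sq_le_two_mul (a b : F) : ‖a + b‖ ^ 2 ≤ 2 * (‖a‖ ^ 2 + ‖b‖ ^ 2) :=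
  (pow_le_pow_left₀ (norm_nonneg _) (norm_add_le a b) 2).trans add_sq_le

lemma norm_sum_sq_of_pairwise_eq_zero_or {κ : Type*} {s : Finset κ} {v : κ → F}
    (hv : Pairwise fun i j => v i = 0 ∨ v j = 0) :
    ‖∑ i ∈ s, v i‖ ^ 2 = ∑ i ∈ s, ‖v i‖ ^ 2 := by
  by_cases hzero : ∀ i ∈ s, v i = 0
  · rw [Finset.sum_eq_zero hzero, Finset.sum_eq_zero fun i hi => by simp [hzero i hi]]
    simp
  · push Not at hzero
    obtain ⟨i, hi, hvi⟩ := hzero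
    have hne (j : κ) (hj : j ≠ i) : v j = 0 := (hv hj).resolve_right hvi
    rw [Finset.sum_eq_single_of_mem i hi fun j _ hj => hne j hj,
      Finset.sum_eq_single_of_mem i hi fun j _ hj => by simp [hne j hj]]

lemma integrable_norm_sq {X : Type*} [TopologicalSpace X] [MeasurableSpace X]
    [OpensMeasurableSpace X] {μ : Measure X} [IsFiniteMeasureOnCompacts μ] {u : X → F}
    (hu : Continuous u) (hc : HasCompactSupport u) : Integrable (fun x => ‖u x‖ ^ 2) μ := by
  have hsq : HasCompactSupport fun x => ‖u x‖ ^ 2 :=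
    hc.comp_left (g := fun z : F => ‖z‖ ^ 2) (by simp)
  exact (hu.norm.pow 2).integrable_of_hasCompactSupport hsq

end NormSq

section Energy

variable {E F : Type*} [NormedAddCommGroup E] [NormedSpace ℝ E]
  [NormedAddCommGroup F] [NormedSpace ℝ F] {u v : E → F}

/-- The integrand `|u|² + |∇u|²` of the squared `H¹` norm, with the operator norm of the derivative
as the size of the gradient. -/
noncomputable def h1Density (u : E → F) (x : E) : ℝ :=
  ‖u x‖ ^ 2 + ‖fderiv ℝ u x‖ ^ 2

lemma h1Density_nonneg (u : E → F) (x : E) : 0 ≤ h1Density u x := by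
  unfold h1Density
  positivity

lemma continuous_h1Density (hu : ContDiff ℝ 1 u) : Continuous (h1Density u) :=
  (hu.continuous.norm.pow 2).add ((hu.continuous_fderiv one_ne_zero).norm.pow 2)

lemma hasCompactSupport_h1Density (hc : HasCompactSupport u) :
    HasCompactSupport (h1Density u) :=
  .intro hc fun x hx => by
    simp [h1Density, image_eq_zero_of_notMem_tsupport hx, fderiv_of_notMem_tsupport ℝ hx]

lemma h1Density_add_le (hu : Differentiable ℝ u) (hv : Differentiable ℝ v) (x : E) :
    h1Density (u + v) x ≤ 2 * (h1Density u x + h1Density v x) := by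
  have hfderiv : fderiv ℝ (u + v) x = fderiv ℝ u x + fderiv ℝ v x := fderiv_add (hu x) (hv x)
  have hval := norm_add_sq_le_two_mul (u x) (v x)
  have hgrad := norm_add_sq_le_two_mul (fderiv ℝ u x) (fderiv ℝ v x)
  simp only [h1Density, Pi.add_apply, hfderiv]
  linarith

variable [MeasurableSpace E] {μ : Measure E}

/-- The squared `H¹` norm of `u`; like the integral defining it, it is only meaningful when
`h1Density u` is integrable. -/
noncomputable def h1Energy (μ : Measure E) (u : E → F) : ℝ :=
  ∫ x, h1Density u x ∂μ

@[simp]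
lemma h1Energy_zero : h1Energy μ (0 : E → F) = 0 := by
  simp [h1Energy, h1Density]

variable [OpensMeasurableSpace E] [IsFiniteMeasureOnCompacts μ]

lemma integrable_norm_fderiv_sq (hu : ContDiff ℝ 1 u) (hc : HasCompactSupport u) :
    Integrable (fun x => ‖fderiv ℝ u x‖ ^ 2) μ :=
  integrable_norm_sq (hu.continuous_fderiv one_ne_zero) (hc.fderiv ℝ)

lemma integrable_h1Density (hu : ContDiff ℝ 1 u) (hc : HasCompactSupport u) :
    Integrable (h1Density u) μ :=
  (integrable_norm_sq hu.continuous hc).add (integrable_norm_fderiv_sq hu hc)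

lemma h1Energy_eq_add (hu : ContDiff ℝ 1 u) (hc : HasCompactSupport u) :
    h1Energy μ u = (∫ x, ‖u x‖ ^ 2 ∂μ) + ∫ x, ‖fderiv ℝ u x‖ ^ 2 ∂μ :=
  integral_add (integrable_norm_sq hu.continuous hc) (integrable_norm_fderiv_sq hu hc)

lemma h1Energy_add_le (hu : ContDiff ℝ 1 u) (huc : HasCompactSupport u) (hv : ContDiff ℝ 1 v)
    (hvc : HasCompactSupport v) :
    h1Energy μ (u + v) ≤ 2 * (h1Energy μ u + h1Energy μ v) := by
  have hu_int := integrable_h1Density (μ := μ) hu huc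
  have hv_int := integrable_h1Density (μ := μ) hv hvc
  simp only [h1Energy]
  rw [← integral_add hu_int hv_int, ← integral_const_mul]
  exact integral_mono (integrable_h1Density (hu.add hv) (huc.add hvc))
    ((hu_int.add hv_int).const_mul 2)
    (h1Density_add_le (hu.differentiable one_ne_zero) (hv.differentiable one_ne_zero))

lemma integral_norm_sq_add_integral_sum_fderiv_apply_sq_le {κ : Type*} [Fintype κ] (e : κ → E)
    (hu : ContDiff ℝ 1 u) (hc : HasCompactSupport u) :
    (∫ x, ‖u x‖ ^ 2 ∂μ) + (∫ x, ∑ i, ‖fderiv ℝ u x (e i)‖ ^ 2 ∂μ) ≤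
      (1 + ∑ i, ‖e i‖ ^ 2) * h1Energy μ u := by
  have hgrad : (∫ x, ∑ i, ‖fderiv ℝ u x (e i)‖ ^ 2 ∂μ) ≤
      (∑ i, ‖e i‖ ^ 2) * ∫ x, ‖fderiv ℝ u x‖ ^ 2 ∂μ := by
    rw [← integral_const_mul]
    refine integral_mono_of_nonneg (.of_forall fun x => by positivity)
      ((integrable_norm_fderiv_sq hu hc).const_mul _) (.of_forall fun x => ?_)
    simp only [Finset.sum_mul]
    gcongr with i
    rw [← mul_pow, mul_comm ‖e i‖]
    gcongr
    exact (fderiv ℝ u x).le_opNorm _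
  have hval_nonneg : 0 ≤ ∫ x, ‖u x‖ ^ 2 ∂μ := by positivity
  have hgrad_nonneg : 0 ≤ ∫ x, ‖fderiv ℝ u x‖ ^ 2 ∂μ := by positivity
  have hsum_nonneg : 0 ≤ ∑ i, ‖e i‖ ^ 2 := by positivity
  rw [h1Energy_eq_add hu hc]
  nlinarith

end Energy

section Negligible

variable {E F : Type*} [NormedAddCommGroup E] [NormedSpace ℝ E] [MeasurableSpace E]
  [NormedAddCommGroup F] [NormedSpace ℝ F] {n : ℕ∞} {μ : Measure E} {S T : Set E}

/-- `S` is negligible for `H¹` if compactly supported `C^n` functions with values in `F` can be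
approximated in `H¹` by ones vanishing near `S`. The approximants are not allowed to enlarge the
support, so that approximations for several sets can be composed. -/
def IsH1Negligible (F : Type*) [NormedAddCommGroup F] [NormedSpace ℝ F] (n : ℕ∞) (μ : Measure E)
    (S : Set E) : Prop :=
  ∀ f : E → F, ContDiff ℝ n f → HasCompactSupport f → ∀ ε > 0, ∃ g : E → F,
    ContDiff ℝ n g ∧ Function.support g ⊆ Function.support f ∧ g =ᶠ[𝓝ˢ S] 0 ∧
      h1Energy μ (f - g) < ε

namespace IsH1Negligible

lemma mono (hT : IsH1Negligible F n μ T) (hST : S ⊆ T) : IsH1Negligible F n μ S := by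
  intro f hf hfc ε hε
  obtain ⟨g, hg, hgf, hgT, hfg⟩ := hT f hf hfc ε hε
  exact ⟨g, hg, hgf, hgT.filter_mono (nhdsSet_mono hST), hfg⟩

protected lemma empty : IsH1Negligible F n μ ∅ := by
  intro f hf _ ε hε
  exact ⟨f, hf, subset_rfl, by simp [EventuallyEq], by simpa using hε⟩

variable [OpensMeasurableSpace E] [IsFiniteMeasureOnCompacts μ]

lemma union (hn : 1 ≤ n) (hS : IsH1Negligible F n μ S) (hT : IsH1Negligible F n μ T) :
    IsH1Negligible F n μ (S ∪ T) := by
  intro f hf hfc ε hε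
  obtain ⟨g, hg, hgf, hgS, hfg⟩ := hS f hf hfc (ε / 4) (by positivity)
  have hgc : HasCompactSupport g := hfc.mono hgf
  obtain ⟨h, hh, hhg, hhT, hgh⟩ := hT g hg hgc (ε / 4) (by positivity)
  have hhS : h =ᶠ[𝓝ˢ S] 0 := hgS.mono fun x hx =>
    Function.notMem_support.mp fun hxh => hhg hxh hx
  have hn' : (1 : WithTop ℕ∞) ≤ n := by exact_mod_cast hn
  have henergy : h1Energy μ (f - g + (g - h)) ≤ 2 * (h1Energy μ (f - g) + h1Energy μ (g - h)) :=
    h1Energy_add_le ((hf.sub hg).of_le hn') (hfc.sub hgc) ((hg.sub hh).of_le hn')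
      (hgc.sub (hgc.mono hhg))
  rw [sub_add_sub_cancel] at henergy
  refine ⟨h, hh, hhg.trans hgf, ?_, by linarith⟩
  rw [nhdsSet_union]
  exact eventually_sup.mpr ⟨hhS, hhT⟩

protected lemma iUnion {κ : Type*} [Finite κ] (hn : 1 ≤ n) {S : κ → Set E}
    (hS : ∀ i, IsH1Negligible F n μ (S i)) : IsH1Negligible F n μ (⋃ i, S i) := by
  cases nonempty_fintype κ
  rw [← Set.iSup_eq_iUnion, ← Finset.sup_univ_eq_iSup]
  exact Finset.sup_induction .empty (fun _ h _ h' => h.union hn h') fun i _ => hS i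

lemma exists_approx_vanishing_on_open {κ : Type*} [Fintype κ] (hn : 1 ≤ n)
    (hS : IsH1Negligible F n μ S) {f : E → F} (hf : ContDiff ℝ n f) (hfc : HasCompactSupport f)
    (e : κ → E) {ε : ℝ} (hε : 0 < ε) :
    ∃ g : E → F, ContDiff ℝ n g ∧ HasCompactSupport g ∧
      (∃ U : Set E, IsOpen U ∧ S ⊆ U ∧ ∀ x ∈ U, g x = 0) ∧
      (∫ x, ‖f x - g x‖ ^ 2 ∂μ) +
        (∫ x, ∑ i, ‖fderiv ℝ (fun y => f y - g y) x (e i)‖ ^ 2 ∂μ) < ε := by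
  have hC : 0 < 1 + ∑ i, ‖e i‖ ^ 2 := by positivity
  obtain ⟨g, hg, hgf, hgS, hfg⟩ := hS f hf hfc (ε / (1 + ∑ i, ‖e i‖ ^ 2)) (by positivity)
  have hgc : HasCompactSupport g := hfc.mono hgf
  refine ⟨g, hg, hgc, eventually_nhdsSet_iff_exists.mp hgS, ?_⟩
  refine (integral_norm_sq_add_integral_sum_fderiv_apply_sq_le e
    ((hf.sub hg).of_le (by exact_mod_cast hn)) (hfc.sub hgc)).trans_lt ?_
  exact (lt_div_iff₀' hC).mp hfg

end IsH1Negligible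

end Negligible

section DyadicMean

variable {G F : Type*} [NormedAddCommGroup G] [NormedSpace ℝ G]
  [NormedAddCommGroup F] [NormedSpace ℝ F] {ψ : G → F} {n : ℕ} {r : ℝ}

/-- The average of the first `n` dyadic dilates of `ψ`. When `ψ` is a bump function this is a
discrete version of the logarithmic cutoff. -/
noncomputable def dyadicMean (ψ : G → F) (n : ℕ) (y : G) : F :=
  (n : ℝ)⁻¹ • ∑ i ∈ Finset.range n, ψ ((2 : ℝ) ^ i • y)

lemma contDiff_dyadicMean {m : WithTop ℕ∞} (hψ : ContDiff ℝ m ψ) (n : ℕ) :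
    ContDiff ℝ m (dyadicMean ψ n) :=
  (ContDiff.sum fun _ _ => hψ.comp (contDiff_const_smul _)).const_smul _

lemma hasCompactSupport_dyadicMean (hψ : HasCompactSupport ψ) (n : ℕ) :
    HasCompactSupport (dyadicMean ψ n) := by
  have hsum : HasCompactSupport (∑ i ∈ Finset.range n, fun y => ψ ((2 : ℝ) ^ i • y)) :=
    Finset.sum_induction _ HasCompactSupport (fun _ _ => .add) .zero
      fun _ _ => hψ.comp_smul (pow_ne_zero _ two_ne_zero)
  refine hsum.mono fun y hy hzero => hy ?_
  rw [Finset.sum_apply] at hzero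
  simp only [dyadicMean, hzero, smul_zero]

lemma dyadicMean_eventuallyEq_const {c : F} (hψ : ψ =ᶠ[𝓝 0] fun _ => c) (hn : n ≠ 0) :
    dyadicMean ψ n =ᶠ[𝓝 0] fun _ => c := by
  have hdilate (i : ℕ) : ∀ᶠ y in 𝓝 (0 : G), ψ ((2 : ℝ) ^ i • y) = c :=
    ((continuous_const_smul _).tendsto' 0 0 (smul_zero _)).eventually hψ
  filter_upwards [(Finset.eventually_all (Finset.range n)).mpr fun i _ => hdilate i] with y hy
  rw [dyadicMean, Finset.sum_congr rfl hy, Finset.sum_const, Finset.card_range,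
    ← Nat.cast_smul_eq_nsmul ℝ, inv_smul_smul₀ (Nat.cast_ne_zero.mpr hn)]

lemma norm_dyadicMean_sq_le (ψ : G → F) (n : ℕ) (y : G) :
    ‖dyadicMean ψ n y‖ ^ 2 ≤
      (n : ℝ)⁻¹ * ∑ i ∈ Finset.range n, ‖ψ ((2 : ℝ) ^ i • y)‖ ^ 2 := by
  calc ‖dyadicMean ψ n y‖ ^ 2
      = (n : ℝ)⁻¹ ^ 2 * ‖∑ i ∈ Finset.range n, ψ ((2 : ℝ) ^ i • y)‖ ^ 2 := by
        rw [dyadicMean, norm_smul, mul_pow, Real.norm_of_nonneg (by positivity)]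
    _ ≤ (n : ℝ)⁻¹ ^ 2 * (∑ i ∈ Finset.range n, ‖ψ ((2 : ℝ) ^ i • y)‖) ^ 2 := by
        gcongr
        exact norm_sum_le _ _
    _ ≤ (n : ℝ)⁻¹ ^ 2 * (n * ∑ i ∈ Finset.range n, ‖ψ ((2 : ℝ) ^ i • y)‖ ^ 2) := by
        gcongr
        simpa only [Finset.card_range] using sq_sum_le_card_mul_sum_sq (s := Finset.range n)
    _ = (n : ℝ)⁻¹ * ∑ i ∈ Finset.range n, ‖ψ ((2 : ℝ) ^ i • y)‖ ^ 2 := by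
        rcases eq_or_ne n 0 with rfl | hn
        · simp
        · field_simp

lemma fderiv_dyadicMean (hψ : Differentiable ℝ ψ) (n : ℕ) (y : G) :
    fderiv ℝ (dyadicMean ψ n) y =
      (n : ℝ)⁻¹ • ∑ i ∈ Finset.range n, (2 : ℝ) ^ i • fderiv ℝ ψ ((2 : ℝ) ^ i • y) := by
  have hdilate (i : ℕ) : DifferentiableAt ℝ (fun y => ψ ((2 : ℝ) ^ i • y)) y :=
    (hψ.comp (differentiable_id.const_smul _)) y
  unfold dyadicMean
  rw [fderiv_fun_const_smul (DifferentiableAt.fun_sum fun i _ => hdilate i),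
    fderiv_fun_sum fun i _ => hdilate i]
  simp only [fderiv_comp_smul]

lemma pairwise_two_pow_smul_notMem_shell (r : ℝ) (y : G) :
    Pairwise fun i j : ℕ =>
      ‖(2 : ℝ) ^ i • y‖ ∉ Set.Ico r (2 * r) ∨ ‖(2 : ℝ) ^ j • y‖ ∉ Set.Ico r (2 * r) := by
  intro i j hne
  wlog hij : i < j generalizing i j
  · exact (this hne.symm (hne.lt_or_gt.resolve_left hij)).symm
  by_contra! h
  obtain ⟨⟨hi, -⟩, -, hj⟩ := h
  have hdouble : 2 * ‖(2 : ℝ) ^ i • y‖ ≤ ‖(2 : ℝ) ^ j • y‖ := by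
    simp only [norm_smul, norm_pow, Real.norm_ofNat, ← mul_assoc, ← pow_succ']
    gcongr
    · exact one_le_two
    · exact hij
  linarith

lemma norm_fderiv_dyadicMean_sq (hψ : Differentiable ℝ ψ)
    (hshell : ∀ y, fderiv ℝ ψ y ≠ 0 → ‖y‖ ∈ Set.Ico r (2 * r)) (n : ℕ) (y : G) :
    ‖fderiv ℝ (dyadicMean ψ n) y‖ ^ 2 =
      (n : ℝ)⁻¹ ^ 2 * ∑ i ∈ Finset.range n, (2 ^ i) ^ 2 * ‖fderiv ℝ ψ ((2 : ℝ) ^ i • y)‖ ^ 2 := by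
  have hdisjoint : Pairwise fun i j : ℕ =>
      (2 : ℝ) ^ i • fderiv ℝ ψ ((2 : ℝ) ^ i • y) = 0 ∨
        (2 : ℝ) ^ j • fderiv ℝ ψ ((2 : ℝ) ^ j • y) = 0 := by
    refine (pairwise_two_pow_smul_notMem_shell r y).mono fun i j => Or.imp ?_ ?_ <;>
    · intro h
      rw [not_imp_comm.mp (hshell _) h, smul_zero]
  rw [fderiv_dyadicMean hψ, norm_smul, mul_pow, Real.norm_of_nonneg (by positivity),
    norm_sum_sq_of_pairwise_eq_zero_or hdisjoint]
  simp only [norm_smul, norm_pow, Real.norm_ofNat, mul_pow]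

variable [FiniteDimensional ℝ G] [MeasurableSpace G] [BorelSpace G] (ν : Measure G)
  [ν.IsAddHaarMeasure]

lemma integral_comp_two_pow_smul_le {k : ℕ} (hk : k ≤ finrank ℝ G) {q : G → ℝ}
    (hq : ∀ y, 0 ≤ q y) (i : ℕ) :
    ∫ y, q ((2 : ℝ) ^ i • y) ∂ν ≤ ((2 ^ i) ^ k)⁻¹ * ∫ y, q y ∂ν := by
  rw [Measure.integral_comp_smul, abs_of_pos (by positivity), smul_eq_mul]
  have hq_int : 0 ≤ ∫ y, q y ∂ν := integral_nonneg hq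
  gcongr
  exact one_le_pow₀ one_le_two

lemma integral_norm_dyadicMean_sq_le (hG : 1 ≤ finrank ℝ G) (hψ : Continuous ψ)
    (hψc : HasCompactSupport ψ) (n : ℕ) :
    ∫ y, ‖dyadicMean ψ n y‖ ^ 2 ∂ν ≤ 2 / n * ∫ y, ‖ψ y‖ ^ 2 ∂ν := by
  have hint (i : ℕ) : Integrable (fun y => ‖ψ ((2 : ℝ) ^ i • y)‖ ^ 2) ν :=
    integrable_norm_sq (hψ.comp (continuous_const_smul _))
      (hψc.comp_smul (pow_ne_zero _ two_ne_zero))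
  calc ∫ y, ‖dyadicMean ψ n y‖ ^ 2 ∂ν
      ≤ ∫ y, (n : ℝ)⁻¹ * ∑ i ∈ Finset.range n, ‖ψ ((2 : ℝ) ^ i • y)‖ ^ 2 ∂ν :=
        integral_mono_of_nonneg (.of_forall fun y => by positivity)
          ((integrable_finsetSum _ fun i _ => hint i).const_mul _)
          (.of_forall (norm_dyadicMean_sq_le ψ n))
    _ = (n : ℝ)⁻¹ * ∑ i ∈ Finset.range n, ∫ y, ‖ψ ((2 : ℝ) ^ i • y)‖ ^ 2 ∂ν := by
        rw [integral_const_mul, integral_finsetSum _ fun i _ => hint i]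
    _ ≤ (n : ℝ)⁻¹ * ∑ i ∈ Finset.range n, (1 / 2) ^ i * ∫ y, ‖ψ y‖ ^ 2 ∂ν := by
        gcongr with i
        simpa using integral_comp_two_pow_smul_le ν hG (q := fun y => ‖ψ y‖ ^ 2)
          (fun y => by positivity) i
    _ ≤ (n : ℝ)⁻¹ * (2 * ∫ y, ‖ψ y‖ ^ 2 ∂ν) := by
        rw [← Finset.sum_mul]
        gcongr
        exact sum_geometric_two_le n
    _ = 2 / n * ∫ y, ‖ψ y‖ ^ 2 ∂ν := by ring

lemma integral_norm_fderiv_dyadicMean_sq_le (hG : 2 ≤ finrank ℝ G) (hψ : ContDiff ℝ 1 ψ)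
    (hψc : HasCompactSupport ψ)
    (hshell : ∀ y, fderiv ℝ ψ y ≠ 0 → ‖y‖ ∈ Set.Ico r (2 * r)) (n : ℕ) :
    ∫ y, ‖fderiv ℝ (dyadicMean ψ n) y‖ ^ 2 ∂ν ≤ 1 / n * ∫ y, ‖fderiv ℝ ψ y‖ ^ 2 ∂ν := by
  have hint (i : ℕ) :
      Integrable (fun y => (2 ^ i) ^ 2 * ‖fderiv ℝ ψ ((2 : ℝ) ^ i • y)‖ ^ 2) ν :=
    (integrable_norm_sq ((hψ.continuous_fderiv one_ne_zero).comp (continuous_const_smul _))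
      ((hψc.fderiv ℝ).comp_smul (pow_ne_zero _ two_ne_zero))).const_mul _
  simp only [norm_fderiv_dyadicMean_sq (hψ.differentiable one_ne_zero) hshell]
  rw [integral_const_mul, integral_finsetSum _ fun i _ => hint i]
  simp only [integral_const_mul]
  calc (n : ℝ)⁻¹ ^ 2 *
        ∑ i ∈ Finset.range n, (2 ^ i) ^ 2 * ∫ y, ‖fderiv ℝ ψ ((2 : ℝ) ^ i • y)‖ ^ 2 ∂ν
      ≤ (n : ℝ)⁻¹ ^ 2 * ∑ i ∈ Finset.range n, (2 ^ i) ^ 2 *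
          (((2 ^ i) ^ 2)⁻¹ * ∫ y, ‖fderiv ℝ ψ y‖ ^ 2 ∂ν) := by
        gcongr with i
        exact integral_comp_two_pow_smul_le ν hG (q := fun y => ‖fderiv ℝ ψ y‖ ^ 2)
          (fun y => by positivity) i
    _ = (n : ℝ)⁻¹ ^ 2 * (n * ∫ y, ‖fderiv ℝ ψ y‖ ^ 2 ∂ν) := by
        have hcancel (i : ℕ) : ((2 : ℝ) ^ i) ^ 2 ≠ 0 := by positivity
        simp only [mul_inv_cancel_left₀ (hcancel _), Finset.sum_const, Finset.card_range,
          nsmul_eq_mul]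
    _ = 1 / n * ∫ y, ‖fderiv ℝ ψ y‖ ^ 2 ∂ν := by
        rcases eq_or_ne n 0 with rfl | hn
        · simp
        · field_simp

lemma h1Energy_dyadicMean_le (hG : 2 ≤ finrank ℝ G) (hψ : ContDiff ℝ 1 ψ)
    (hψc : HasCompactSupport ψ)
    (hshell : ∀ y, fderiv ℝ ψ y ≠ 0 → ‖y‖ ∈ Set.Ico r (2 * r)) (n : ℕ) :
    h1Energy ν (dyadicMean ψ n) ≤ 2 / n * h1Energy ν ψ := by
  rw [h1Energy_eq_add (contDiff_dyadicMean hψ n) (hasCompactSupport_dyadicMean hψc n),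
    h1Energy_eq_add hψ hψc, mul_add]
  gcongr
  · exact integral_norm_dyadicMean_sq_le ν (one_le_two.trans hG) hψ.continuous hψc n
  · refine (integral_norm_fderiv_dyadicMean_sq_le ν hG hψ hψc hshell n).trans ?_
    gcongr
    exact one_le_two

end DyadicMean

section Capacity

variable {G : Type*} [NormedAddCommGroup G] [NormedSpace ℝ G] [FiniteDimensional ℝ G]

lemma norm_mem_Icc_of_fderiv_contDiffBump_ne_zero (b : ContDiffBump (0 : G)) {y : G}
    (hy : fderiv ℝ b y ≠ 0) : ‖y‖ ∈ Set.Icc b.rIn b.rOut := by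
  constructor
  · contrapose! hy
    rw [(b.eventuallyEq_one_of_mem_ball (mem_ball_zero_iff.mpr hy)).fderiv_eq]
    exact fderiv_const_apply 1
  · rw [← mem_closedBall_zero_iff, ← b.tsupport_eq]
    exact support_fderiv_subset ℝ hy

variable [MeasurableSpace G] [BorelSpace G]

lemma exists_cutoff_h1Energy_lt (ν : Measure G) [ν.IsAddHaarMeasure] (hG : 2 ≤ finrank ℝ G)
    {ε : ℝ} (hε : 0 < ε) :
    ∃ φ : G → ℝ, (∀ n : ℕ∞, ContDiff ℝ n φ) ∧ HasCompactSupport φ ∧ φ =ᶠ[𝓝 0] 1 ∧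
      h1Energy ν φ < ε := by
  let b : ContDiffBump (0 : G) := ⟨1, 3 / 2, by norm_num, by norm_num⟩
  have hshell (y : G) (hy : fderiv ℝ b y ≠ 0) : ‖y‖ ∈ Set.Ico (1 : ℝ) (2 * 1) := by
    obtain ⟨hin, hout⟩ := norm_mem_Icc_of_fderiv_contDiffBump_ne_zero b hy
    exact ⟨hin, hout.trans_lt (by norm_num)⟩
  have hdecay : Tendsto (fun n : ℕ => 2 / (n : ℝ) * h1Energy ν b) atTop (𝓝 0) := by
    simpa using (tendsto_const_div_atTop_nhds_zero_nat 2).mul_const (h1Energy ν b)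
  obtain ⟨n, hn, hn0⟩ := ((hdecay.eventually_lt_const hε).and (eventually_ne_atTop 0)).exists
  exact ⟨dyadicMean b n, fun m => contDiff_dyadicMean b.contDiff n,
    hasCompactSupport_dyadicMean b.hasCompactSupport n,
    dyadicMean_eventuallyEq_const b.eventuallyEq_one hn0,
    (h1Energy_dyadicMean_le ν hG b.contDiff b.hasCompactSupport hshell n).trans_lt hn⟩

end Capacity

section Kernel

variable {E F G : Type*} [NormedAddCommGroup E] [NormedSpace ℝ E]
  [NormedAddCommGroup F] [NormedSpace ℝ F] [NormedAddCommGroup G] [NormedSpace ℝ G]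
  {L : E →L[ℝ] G} {f : E → F} {φ : G → ℝ}

lemma h1Density_comp_smul_le (hφ : Differentiable ℝ φ) (hf : Differentiable ℝ f) (x : E) :
    h1Density (fun z => φ (L z) • f z) x ≤
      2 * (1 + ‖L‖ ^ 2) * (h1Density f x * h1Density φ (L x)) := by
  have hderiv : fderiv ℝ (fun z => φ (L z) • f z) x =
      φ (L x) • fderiv ℝ f x + ((fderiv ℝ φ (L x)).comp L).smulRight (f x) :=
    (((hφ (L x)).hasFDerivAt.comp x L.hasFDerivAt).smul (hf x).hasFDerivAt).fderiv
  have hcomp : ‖(fderiv ℝ φ (L x)).comp L‖ ^ 2 ≤ ‖fderiv ℝ φ (L x)‖ ^ 2 * ‖L‖ ^ 2 := by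
    rw [← mul_pow]
    gcongr
    exact ContinuousLinearMap.opNorm_comp_le _ _
  have hgrad : ‖fderiv ℝ (fun z => φ (L z) • f z) x‖ ^ 2 ≤
      2 * (‖φ (L x)‖ ^ 2 * ‖fderiv ℝ f x‖ ^ 2 +
        ‖fderiv ℝ φ (L x)‖ ^ 2 * ‖L‖ ^ 2 * ‖f x‖ ^ 2) := by
    rw [hderiv]
    refine (norm_add_sq_le_two_mul _ _).trans ?_
    rw [norm_smul, ContinuousLinearMap.norm_smulRight_apply, mul_pow, mul_pow]
    gcongr
  calc h1Density (fun z => φ (L z) • f z) x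
      ≤ ‖φ (L x)‖ ^ 2 * ‖f x‖ ^ 2 + 2 * (‖φ (L x)‖ ^ 2 * ‖fderiv ℝ f x‖ ^ 2 +
          ‖fderiv ℝ φ (L x)‖ ^ 2 * ‖L‖ ^ 2 * ‖f x‖ ^ 2) := by
        rw [← mul_pow, ← norm_smul]
        exact add_le_add_right hgrad _
    _ ≤ 2 * (1 + ‖L‖ ^ 2) * (h1Density f x * h1Density φ (L x)) := by
        rw [← sub_nonneg]
        have hexcess : 2 * (1 + ‖L‖ ^ 2) * (h1Density f x * h1Density φ (L x)) -
            (‖φ (L x)‖ ^ 2 * ‖f x‖ ^ 2 + 2 * (‖φ (L x)‖ ^ 2 * ‖fderiv ℝ f x‖ ^ 2 +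
              ‖fderiv ℝ φ (L x)‖ ^ 2 * ‖L‖ ^ 2 * ‖f x‖ ^ 2)) =
            ‖φ (L x)‖ ^ 2 * ‖f x‖ ^ 2 + 2 * ‖fderiv ℝ φ (L x)‖ ^ 2 * h1Density f x +
              2 * ‖L‖ ^ 2 * (‖φ (L x)‖ ^ 2 * h1Density f x +
                ‖fderiv ℝ φ (L x)‖ ^ 2 * ‖fderiv ℝ f x‖ ^ 2) := by
          simp only [h1Density]
          ring
        have hf_nonneg := h1Density_nonneg f x
        rw [hexcess]
        positivity

variable [FiniteDimensional ℝ E] [FiniteDimensional ℝ G] [MeasurableSpace E] [BorelSpace E]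
  (μ : Measure E) [μ.IsAddHaarMeasure]

section Pushforward

variable [MeasurableSpace G] [BorelSpace G] (ν : Measure G) [ν.IsAddHaarMeasure]

/- A linear splitting `E ≃ G × ker L` turns `μ` into a multiple of a product measure, and confines
the compact set to a set of finite measure in the direction of the kernel. -/
lemma exists_map_restrict_le_smul (hL : Function.Surjective L) {K : Set E}
    (hK : IsCompact K) : ∃ C : NNReal, (μ.restrict K).map L ≤ C • ν := by
  obtain ⟨s, hs⟩ := L.exists_rightInverse_of_surjective (LinearMap.range_eq_top.mpr hL)
  let e := ContinuousLinearEquiv.equivOfRightInverse L s (DFunLike.congr_fun hs)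
  let κ : Measure L.ker := Measure.addHaar
  have : (μ.map e).IsAddHaarMeasure := e.isAddHaarMeasure_map μ
  let c := (μ.map e).addHaarScalarFactor (ν.prod κ)
  have hμ : μ.map e = c • ν.prod κ := Measure.isAddLeftInvariant_eq_smul _ _
  let K' : Set L.ker := (fun x => (e x).2) '' K
  have hK' : κ K' < ⊤ := (hK.image (continuous_snd.comp e.continuous)).measure_lt_top
  refine ⟨c * (κ K').toNNReal, Measure.le_iff.mpr fun A hA => ?_⟩
  have hsub : L ⁻¹' A ∩ K ⊆ e ⁻¹' (A ×ˢ K') := fun x ⟨hxA, hxK⟩ =>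
    ⟨hxA, x, hxK, rfl⟩
  calc (μ.restrict K).map L A = μ (L ⁻¹' A ∩ K) := by
        rw [Measure.map_apply L.continuous.measurable hA,
          Measure.restrict_apply (L.continuous.measurable hA)]
    _ ≤ μ (e ⁻¹' (A ×ˢ K')) := measure_mono hsub
    _ = μ.map e (A ×ˢ K') := (e.toHomeomorph.toMeasurableEquiv.map_apply _).symm
    _ = (c * (κ K').toNNReal : NNReal) • ν A := by
        rw [hμ, Measure.smul_apply, Measure.prod_prod, mul_smul]
        simp only [ENNReal.smul_def, smul_eq_mul, ENNReal.coe_toNNReal hK'.ne, mul_comm]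
    _ = ((c * (κ K').toNNReal) • ν) A := rfl

lemma exists_integral_mul_comp_le (hL : Function.Surjective L) {w : E → ℝ} (hw : Continuous w)
    (hwc : HasCompactSupport w) :
    ∃ C : ℝ, 0 ≤ C ∧ ∀ q : G → ℝ, (∀ y, 0 ≤ q y) → Integrable q ν →
      Integrable (fun x => w x * q (L x)) μ ∧ ∫ x, w x * q (L x) ∂μ ≤ C * ∫ y, q y ∂ν := by
  obtain ⟨M, hM⟩ := hwc.exists_bound_of_continuous hw
  have hM0 : 0 ≤ M := (norm_nonneg _).trans (hM 0)
  obtain ⟨C, hC⟩ := exists_map_restrict_le_smul μ ν hL hwc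
  refine ⟨M * C, by positivity, fun q hq hq_int => ?_⟩
  have hq_map : Integrable q ((μ.restrict (tsupport w)).map L) :=
    (hq_int.smul_measure_nnreal).mono_measure hC
  have hqL : IntegrableOn (fun x => q (L x)) (tsupport w) μ :=
    hq_map.comp_measurable L.continuous.measurable
  have hwq : IntegrableOn (fun x => w x * q (L x)) (tsupport w) μ :=
    hqL.bdd_mul hw.aestronglyMeasurable (.of_forall hM)
  have hzero (x : E) (hx : x ∉ tsupport w) : w x * q (L x) = 0 := by
    rw [image_eq_zero_of_notMem_tsupport hx, zero_mul]
  refine ⟨(integrableOn_iff_integrable_of_support_subset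
    (Function.support_subset_iff'.mpr hzero)).mp hwq, ?_⟩
  calc ∫ x, w x * q (L x) ∂μ
      = ∫ x in tsupport w, w x * q (L x) ∂μ :=
        (setIntegral_eq_integral_of_forall_compl_eq_zero hzero).symm
    _ ≤ ∫ x in tsupport w, M * q (L x) ∂μ :=
        integral_mono hwq (hqL.const_mul M) fun x =>
          mul_le_mul_of_nonneg_right ((Real.le_norm_self _).trans (hM x)) (hq _)
    _ = M * ∫ y, q y ∂(μ.restrict (tsupport w)).map L := by
        rw [integral_const_mul, integral_map L.continuous.aemeasurable hq_map.aestronglyMeasurable]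
    _ ≤ M * ∫ y, q y ∂(C • ν) := by
        refine mul_le_mul_of_nonneg_left ?_ hM0
        exact integral_mono_measure hC (.of_forall hq) hq_int.smul_measure_nnreal
    _ = M * C * ∫ y, q y ∂ν := by
        rw [integral_smul_nnreal_measure, NNReal.smul_def, smul_eq_mul, mul_assoc]

lemma exists_h1Energy_comp_smul_le (hL : Function.Surjective L) (hf : ContDiff ℝ 1 f)
    (hfc : HasCompactSupport f) :
    ∃ C : ℝ, 0 ≤ C ∧ ∀ φ : G → ℝ, ContDiff ℝ 1 φ → HasCompactSupport φ →
      h1Energy μ (fun x => φ (L x) • f x) ≤ C * h1Energy ν φ := by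
  obtain ⟨C, hC, hint⟩ := exists_integral_mul_comp_le μ ν hL (continuous_h1Density hf)
    (hasCompactSupport_h1Density hfc)
  refine ⟨2 * (1 + ‖L‖ ^ 2) * C, by positivity, fun φ hφ hφc => ?_⟩
  obtain ⟨hprod_int, hprod_le⟩ := hint _ (h1Density_nonneg φ) (integrable_h1Density hφ hφc)
  calc h1Energy μ (fun x => φ (L x) • f x)
      ≤ ∫ x, 2 * (1 + ‖L‖ ^ 2) * (h1Density f x * h1Density φ (L x)) ∂μ :=
        integral_mono_of_nonneg (.of_forall (h1Density_nonneg _)) (hprod_int.const_mul _)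
          (.of_forall (h1Density_comp_smul_le (hφ.differentiable one_ne_zero)
            (hf.differentiable one_ne_zero)))
    _ ≤ 2 * (1 + ‖L‖ ^ 2) * (C * h1Energy ν φ) := by
        rw [integral_const_mul]
        gcongr
        exact hprod_le
    _ = 2 * (1 + ‖L‖ ^ 2) * C * h1Energy ν φ := (mul_assoc _ _ _).symm

end Pushforward

lemma isH1Negligible_ker {n : ℕ∞} (hn : 1 ≤ n) (hL : Function.Surjective L)
    (hG : 2 ≤ finrank ℝ G) : IsH1Negligible F n μ (L.ker : Set E) := by
  intro f hf hfc ε hε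
  borelize G
  let ν : Measure G := Measure.addHaar
  obtain ⟨C, hC, hcut⟩ := exists_h1Energy_comp_smul_le μ ν hL
    (hf.of_le (by exact_mod_cast hn)) hfc
  obtain ⟨φ, hφ, hφc, hφ_one, hφ_energy⟩ :=
    exists_cutoff_h1Energy_lt ν hG (ε := ε / (C + 1)) (by positivity)
  refine ⟨fun x => f x - φ (L x) • f x, hf.sub (((hφ n).comp L.contDiff).smul hf), ?_, ?_, ?_⟩
  · intro x hx hfx
    exact hx (by simp [hfx])
  · refine eventually_nhdsSet_iff_forall.mpr fun x hx => ?_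
    have hLx : Tendsto L (𝓝 x) (𝓝 0) := L.continuous.tendsto' x 0 hx
    filter_upwards [hLx.eventually hφ_one] with y hy
    simp [hy]
  · have hdiff : (f - fun x => f x - φ (L x) • f x) = fun x => φ (L x) • f x := by
      ext x
      exact sub_sub_cancel _ _
    rw [hdiff]
    calc h1Energy μ (fun x => φ (L x) • f x) ≤ C * h1Energy ν φ := hcut φ (hφ 1) hφc
      _ ≤ C * (ε / (C + 1)) := by gcongr
      _ < ε := by
        rw [mul_div_left_comm]
        exact mul_lt_of_lt_one_right hε ((div_lt_one (by positivity)).mpr (lt_add_one C))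

end Kernel

section Configuration

variable {ι V F : Type*} [Fintype ι] [NormedAddCommGroup V] [NormedSpace ℝ V]
  [FiniteDimensional ℝ V] [MeasurableSpace V] [BorelSpace V] [NormedAddCommGroup F]
  [NormedSpace ℝ F] (μ : Measure (ι → V)) [μ.IsAddHaarMeasure] {n : ℕ∞}

lemma isH1Negligible_setOf_apply_eq (hV : 2 ≤ finrank ℝ V) (hn : 1 ≤ n) {j k : ι} (hjk : j ≠ k) :
    IsH1Negligible F n μ {x : ι → V | x j = x k} := by
  classical
  let L : (ι → V) →L[ℝ] V := .proj j - .proj k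
  have hL : Function.Surjective L := fun v => ⟨Pi.single j v, by simp [L, hjk.symm]⟩
  exact (isH1Negligible_ker μ hn hL hV).mono fun x hx => sub_eq_zero.mpr hx

lemma isH1Negligible_fatDiagonal (hV : 2 ≤ finrank ℝ V) (hn : 1 ≤ n) :
    IsH1Negligible F n μ {x : ι → V | ∃ j k, j ≠ k ∧ x j = x k} :=
  (IsH1Negligible.iUnion hn fun p : {p : ι × ι // p.1 ≠ p.2} =>
    isH1Negligible_setOf_apply_eq μ hV hn p.2).mono fun _ ⟨j, k, hjk, hx⟩ =>
      Set.mem_iUnion.mpr ⟨⟨(j, k), hjk⟩, hx⟩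

end Configuration

theorem fat_diagonal_H1_density_general {ι κ V F : Type*} [Fintype ι] [Fintype κ]
    [NormedAddCommGroup V] [NormedSpace ℝ V] [FiniteDimensional ℝ V] [MeasurableSpace V]
    [BorelSpace V] [NormedAddCommGroup F] [NormedSpace ℝ F] (hV : 2 ≤ finrank ℝ V)
    (μ : Measure (ι → V)) [μ.IsAddHaarMeasure] {n : ℕ∞} (hn : 1 ≤ n) {f : (ι → V) → F}
    (hf : ContDiff ℝ n f) (hfc : HasCompactSupport f) (e : κ → ι → V) {ε : ℝ} (hε : 0 < ε) :
    ∃ g : (ι → V) → F, ContDiff ℝ n g ∧ HasCompactSupport g ∧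
      (∃ U : Set (ι → V), IsOpen U ∧ {x | ∃ j k, j ≠ k ∧ x j = x k} ⊆ U ∧ ∀ x ∈ U, g x = 0) ∧
      (∫ x, ‖f x - g x‖ ^ 2 ∂μ) +
        (∫ x, ∑ i, ‖fderiv ℝ (fun y => f y - g y) x (e i)‖ ^ 2 ∂μ) < ε :=
  (isH1Negligible_fatDiagonal μ hV hn).exists_approx_vanishing_on_open hn hf hfc e hε

/-- **No `H¹`-capacity of the fat diagonal** (`H¹₀(ℝ^{2N} ∖ △) = H¹(ℝ^{2N})`):
smooth compactly supported functions vanishing on a neighborhood of the fat diagonal are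
dense in `H¹` among smooth compactly supported functions. -/
theorem fat_diagonal_H1_density (N : ℕ) (hN : 2 ≤ N)
    (f : (Fin N → Fin 2 → ℝ) → ℂ)
    (hf : ContDiff ℝ (⊤ : ℕ∞) f) (hsupp : HasCompactSupport f)
    (ε : ℝ) (hε : 0 < ε) :
    ∃ g : (Fin N → Fin 2 → ℝ) → ℂ,
      ContDiff ℝ (⊤ : ℕ∞) g ∧ HasCompactSupport g ∧
      (∃ U : Set (Fin N → Fin 2 → ℝ), IsOpen U ∧ fatDiagonal N ⊆ U ∧
        ∀ x ∈ U, g x = 0) ∧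
      (∫ x : Fin N → Fin 2 → ℝ, ‖f x - g x‖ ^ 2) +
          (∫ x : Fin N → Fin 2 → ℝ, ∑ j : Fin N, ∑ p : Fin 2,
            ‖fderiv ℝ (fun y => f y - g y) x (Pi.single j (Pi.single p 1))‖ ^ 2) < ε := by
  have hdim : 2 ≤ finrank ℝ (Fin 2 → ℝ) := (finrank_fin_fun ℝ).ge
  have : (volume : Measure (Fin N → Fin 2 → ℝ)).IsAddHaarMeasure := Measure.pi.isAddHaarMeasure _
  simpa only [fatDiagonal, Fintype.sum_prod_type] using
    fat_diagonal_H1_density_general hdim volume le_top hf hsupp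
      (fun q : Fin N × Fin 2 => Pi.single q.1 (Pi.single q.2 1)) hε
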